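/- ζ(3) = -(π²/4) ∫_{ℝ²} ∫_0^1 sech²(πw₁) sech²(πw₂) / (i w₂ - 1/2 + u(i w₁ - 1/2)) du dw₂ dw₁, where the triple integral converges and is real. -/

import Mathlib

open MeasureTheory Real

lemma sech_sq_eq (w : ℝ) : (1 / Real.cosh (π * w)) ^ 2
    = 2 / π * (sigmoid (2 * π * w) * (1 - sigmoid (2 * π * w)) * (2 * π)) := by
  rw [← sigmoid_neg, sigmoid_def, sigmoid_def, Real.cosh_eq]
  have h1 : Real.exp (2 * π * w) = Real.exp (π * w) ^ 2 := by
    rw [← Real.exp_nat_mul]; congr 1; push_cast; ring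
  have h2 : Real.exp (-(2 * π * w)) = (Real.exp (π * w) ^ 2)⁻¹ := by
    rw [Real.exp_neg, h1]
  have h3 : Real.exp (-(π * w)) = (Real.exp (π * w))⁻¹ := Real.exp_neg _
  rw [neg_neg, h1, h2, h3]
  have hp := Real.exp_pos (π * w)
  have := Real.pi_pos
  generalize Real.exp (π * w) = x at *
  field_simp
  ring

lemma hasDeriv_sig (w : ℝ) : HasDerivAt (fun w : ℝ => sigmoid (2 * π * w))
    (sigmoid (2 * π * w) * (1 - sigmoid (2 * π * w)) * (2 * π)) w := by
  have h := (hasDerivAt_sigmoid (2 * π * w)).comp w ((hasDerivAt_id w).const_mul (2 * π))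
  simpa [Function.comp_def] using h

lemma sig_inj : Set.InjOn (fun w : ℝ => sigmoid (2 * π * w)) Set.univ := by
  intro a _ b _ h
  have := sigmoid_injective h
  have hp := Real.pi_pos
  simpa [hp.ne'] using this

lemma sig_image : (fun w : ℝ => sigmoid (2 * π * w)) '' Set.univ = Set.Ioo 0 1 := by
  rw [← range_sigmoid, Set.image_univ]
  ext y
  constructor
  · rintro ⟨w, rfl⟩; exact ⟨_, rfl⟩
  · rintro ⟨w, rfl⟩; exact ⟨w / (2 * π), by
      have hp := Real.pi_pos
      simp only
      congr 1
      field_simp⟩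

lemma sig_deriv_nonneg (w : ℝ) :
    0 ≤ sigmoid (2 * π * w) * (1 - sigmoid (2 * π * w)) * (2 * π) := by
  have h1 := sigmoid_nonneg (2 * π * w)
  have h2 := sigmoid_le_one (2 * π * w)
  have hp := Real.pi_pos
  have : 0 ≤ 1 - sigmoid (2 * π * w) := by linarith
  positivity

lemma integrable_sech_sq : Integrable (fun w : ℝ => (1 / Real.cosh (π * w)) ^ 2) := by
  have h := (integrableOn_image_iff_integrableOn_abs_deriv_smul MeasurableSet.univ
    (fun w _ => (hasDeriv_sig w).hasDerivWithinAt) sig_inj (fun _ => (1:ℝ))).1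
    (by rw [sig_image]; simp)
  rw [integrableOn_univ] at h
  refine (h.const_mul (2 / π)).congr (Filter.Eventually.of_forall fun w => ?_)
  simp only [smul_eq_mul, mul_one]
  rw [abs_of_nonneg (sig_deriv_nonneg w), ← sech_sq_eq]

lemma beta_int {t : ℝ} (ht : 0 < t) :
    Complex.betaIntegral (1 + Complex.I * t / (2 * π)) (1 - Complex.I * t / (2 * π))
      = ((t / 2 / Real.sinh (t / 2) : ℝ) : ℂ) := by
  have hp : (π : ℂ) ≠ 0 := by exact_mod_cast Real.pi_pos.ne'
  have htc : (t : ℂ) ≠ 0 := by exact_mod_cast ht.ne'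
  set a : ℂ := Complex.I * t / (2 * π) with ha
  have hre : a.re = 0 := by
    have : a = ((t / (2 * π) : ℝ) : ℂ) * Complex.I := by rw [ha]; push_cast; ring
    rw [this]; simp [-Complex.ofReal_div]
  have h := Complex.Gamma_mul_Gamma_eq_betaIntegral (s := 1 + a) (t := 1 - a)
    (by simp [hre]) (by simp [hre])
  have h2 : (1 + a) + (1 - a) = 2 := by ring
  have hg : Complex.Gamma 2 = 1 := by
    have := Complex.Gamma_nat_eq_factorial 1
    have e : ((1 : ℕ) : ℂ) + 1 = 2 := by norm_num
    rw [e] at this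
    rw [this]; simp
  rw [h2, hg, one_mul] at h
  rw [← h]
  have ha0 : a ≠ 0 := by
    rw [ha]; simp [hp, htc]
  rw [add_comm, Complex.Gamma_add_one a ha0, mul_assoc, Complex.Gamma_mul_Gamma_one_sub]
  have h3 : (π : ℂ) * a = ((t / 2 : ℝ) : ℂ) * Complex.I := by
    rw [ha]; push_cast; field_simp
  rw [h3, Complex.sin_mul_I]
  have hs : Complex.sinh ((t / 2 : ℝ) : ℂ) ≠ 0 := by
    rw [← Complex.ofReal_sinh]
    exact_mod_cast (Real.sinh_pos_iff.2 (by linarith : 0 < t / 2)).ne'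
  rw [Complex.ofReal_div (t / 2) (Real.sinh (t / 2)), Complex.ofReal_sinh, ha]
  have hI := Complex.I_ne_zero
  field_simp
  push_cast; ring

lemma fourier_sech {t : ℝ} (ht : 0 < t) :
    ∫ w : ℝ, (((1 / Real.cosh (π * w)) ^ 2 : ℝ) : ℂ) * Complex.exp (t * (Complex.I * w - 1 / 2))
      = ((2 / π * (t / (Real.exp t - 1)) : ℝ) : ℂ) := by
  have hp : (π : ℂ) ≠ 0 := by exact_mod_cast Real.pi_pos.ne'
  have hb := beta_int ht
  rw [Complex.betaIntegral, intervalIntegral.integral_of_le zero_le_one,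
    integral_Ioc_eq_integral_Ioo, ← sig_image,
    integral_image_eq_integral_abs_deriv_smul MeasurableSet.univ
    (fun w _ => (hasDeriv_sig w).hasDerivWithinAt) sig_inj, Measure.restrict_univ] at hb
  have key : ∀ w : ℝ, (((1 / Real.cosh (π * w)) ^ 2 : ℝ) : ℂ) *
        Complex.exp (t * (Complex.I * w - 1 / 2))
      = ((2 / π * Real.exp (-(t / 2)) : ℝ) : ℂ) *
        (|sigmoid (2 * π * w) * (1 - sigmoid (2 * π * w)) * (2 * π)| •
          (((sigmoid (2 * π * w) : ℝ) : ℂ) ^ (1 + Complex.I * t / (2 * π) - 1)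
          * (1 - ((sigmoid (2 * π * w) : ℝ) : ℂ)) ^ (1 - Complex.I * t / (2 * π) - 1))) := by
    intro w
    rw [abs_of_nonneg (sig_deriv_nonneg w), sech_sq_eq, Complex.real_smul]
    have h1 := sigmoid_pos (2 * π * w)
    have h2 := sigmoid_pos (-(2 * π * w))
    have e1 : (1 : ℂ) - ((sigmoid (2 * π * w) : ℝ) : ℂ) = ((sigmoid (-(2 * π * w)) : ℝ) : ℂ) := by
      rw [sigmoid_neg]; push_cast; ring
    have h3 : Real.log (sigmoid (-(2 * π * w))) = Real.log (sigmoid (2 * π * w)) - 2 * π * w := by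
      rw [← sigmoid_mul_rexp_neg, Real.log_mul h1.ne' (Real.exp_pos _).ne', Real.log_exp]; ring
    rw [e1, Complex.cpow_def_of_ne_zero (by exact_mod_cast h1.ne'),
      Complex.cpow_def_of_ne_zero (by exact_mod_cast h2.ne'), ← Complex.ofReal_log h1.le,
      ← Complex.ofReal_log h2.le, h3, ← Complex.exp_add]
    have e2 : Complex.exp (t * (Complex.I * w - 1 / 2)) = ((Real.exp (-(t / 2)) : ℝ) : ℂ) *
        Complex.exp (((Real.log (sigmoid (2 * π * w)) : ℝ) : ℂ) * (1 + Complex.I * t / (2 * π) - 1)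
        + ((Real.log (sigmoid (2 * π * w)) - 2 * π * w : ℝ) : ℂ)
          * (1 - Complex.I * t / (2 * π) - 1)) := by
      rw [Complex.ofReal_exp, ← Complex.exp_add]
      congr 1
      push_cast
      field_simp
      ring
    rw [e2]
    push_cast
    ring
  rw [integral_congr_ae (Filter.Eventually.of_forall key), integral_const_mul]
  rw [hb, ← Complex.ofReal_mul]
  congr 1
  rw [Real.sinh_eq]
  have h1 : Real.exp t = Real.exp (t / 2) ^ 2 := by
    rw [← Real.exp_nat_mul]; congr 1; push_cast; ring
  rw [h1, Real.exp_neg]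
  have h2 : 1 < Real.exp (t / 2) := Real.one_lt_exp_iff.2 (by linarith)
  generalize Real.exp (t / 2) = x at *
  have : x ^ 2 - 1 ≠ 0 := by nlinarith
  have : 0 < x := by linarith
  have : x - x⁻¹ ≠ 0 := by
    have : x⁻¹ < 1 := inv_lt_one_of_one_lt₀ h2
    linarith
  have := Real.pi_pos
  have e : x - x⁻¹ = (x ^ 2 - 1) / x := by field_simp
  rw [e]
  field_simp

lemma h_pos {x : ℝ} (hx : 0 < x) : 0 < -Real.log (1 - Real.exp (-x)) := by
  have h1 : Real.exp (-x) < 1 := by rw [Real.exp_lt_one_iff]; linarith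
  have h2 := Real.exp_pos (-x)
  have := Real.log_neg (x := 1 - Real.exp (-x)) (by linarith) (by linarith)
  linarith

lemma h_invol {x : ℝ} (hx : 0 < x) :
    -Real.log (1 - Real.exp (-(-Real.log (1 - Real.exp (-x))))) = x := by
  have h1 : Real.exp (-x) < 1 := by rw [Real.exp_lt_one_iff]; linarith
  rw [neg_neg, Real.exp_log (by linarith)]
  simp

lemma h_deriv {x : ℝ} (hx : 0 < x) :
    HasDerivAt (fun x => -Real.log (1 - Real.exp (-x))) (-(1 / (Real.exp x - 1))) x := by
  have h1 : Real.exp (-x) < 1 := by rw [Real.exp_lt_one_iff]; linarith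
  have h2 : 1 < Real.exp x := Real.one_lt_exp_iff.2 hx
  have h := (((hasDerivAt_id x).neg.exp.const_sub 1).log (by simp; linarith)).neg
  refine h.congr_deriv ?_
  simp only [id, Pi.neg_apply]
  have h3 : Real.exp x - 1 ≠ 0 := by linarith
  rw [Real.exp_neg]
  have e : 1 - (Real.exp x)⁻¹ = (Real.exp x - 1) / Real.exp x := by
    field_simp
  rw [e]
  field_simp

lemma lint_tail {v : ℝ} (hv : 0 < v) :
    ∫⁻ t in Set.Ioi v, ENNReal.ofReal (1 / (Real.exp t - 1))
      = ENNReal.ofReal (-Real.log (1 - Real.exp (-v))) := by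
  have hd : ∀ x ∈ Set.Ici v, HasDerivAt (fun x => Real.log (1 - Real.exp (-x)))
      (1 / (Real.exp x - 1)) x := by
    intro x hx
    have := (h_deriv (lt_of_lt_of_le hv hx)).neg
    simpa [Pi.neg_def] using this
  have hpos : ∀ x ∈ Set.Ioi v, 0 ≤ 1 / (Real.exp x - 1) := by
    intro x hx
    have : 1 < Real.exp x := Real.one_lt_exp_iff.2 (hv.trans hx)
    have : 0 < Real.exp x - 1 := by linarith
    positivity
  have hl : Filter.Tendsto (fun x => Real.log (1 - Real.exp (-x))) Filter.atTop (nhds 0) := by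
    have h1 : Filter.Tendsto (fun x : ℝ => 1 - Real.exp (-x)) Filter.atTop (nhds 1) := by
      simpa using (Real.tendsto_exp_neg_atTop_nhds_zero).const_sub (1 : ℝ)
    have := (Real.continuousAt_log (one_ne_zero)).tendsto.comp h1
    simpa [Function.comp_def] using this
  have hi := integrableOn_Ioi_deriv_of_nonneg' hd hpos hl
  rw [← ofReal_integral_eq_lintegral_ofReal hi
    ((ae_restrict_iff' measurableSet_Ioi).2 (Filter.Eventually.of_forall hpos)),
    integral_Ioi_of_hasDerivAt_of_nonneg' hd hpos hl, zero_sub]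

lemma h_image : (fun x => -Real.log (1 - Real.exp (-x))) '' Set.Ioi (0:ℝ) = Set.Ioi 0 := by
  ext y
  constructor
  · rintro ⟨x, hx, rfl⟩; exact h_pos hx
  · intro hy; exact ⟨_, h_pos hy, h_invol hy⟩

lemma lint_sub :
    ∫⁻ v in Set.Ioi (0:ℝ), ENNReal.ofReal (v / (Real.exp v - 1)) *
      ENNReal.ofReal (-Real.log (1 - Real.exp (-v)))
    = ∫⁻ x in Set.Ioi (0:ℝ), ENNReal.ofReal (x * -Real.log (1 - Real.exp (-x))) := by
  conv_lhs => rw [← h_image]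
  rw [lintegral_image_eq_lintegral_abs_deriv_mul measurableSet_Ioi
    (fun x hx => (h_deriv hx).hasDerivWithinAt)
    (fun a ha b hb hab => by
      rw [← h_invol ha, ← h_invol hb]
      rw [hab])]
  refine setLIntegral_congr_fun measurableSet_Ioi fun x hx => ?_
  have hx' : 0 < x := hx
  rw [h_invol hx]
  have hp := h_pos hx
  have h2 : 1 < Real.exp x := Real.one_lt_exp_iff.2 hx
  have h1 : Real.exp (-x) < 1 := by rw [Real.exp_lt_one_iff]; linarith
  have h3 : 0 < Real.exp x - 1 := by linarith
  have e : Real.exp (-Real.log (1 - Real.exp (-x))) - 1 = 1 / (Real.exp x - 1) := by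
    rw [Real.exp_neg, Real.exp_log (by linarith), Real.exp_neg]
    have e : 1 - (Real.exp x)⁻¹ = (Real.exp x - 1) / Real.exp x := by
      field_simp
    rw [e]; field_simp; ring
  rw [e, abs_neg, abs_of_pos (by positivity), ← ENNReal.ofReal_mul (by positivity),
    ← ENNReal.ofReal_mul (by positivity)]
  congr 1
  field_simp

lemma int_x_exp (n : ℕ) :
    ∫⁻ x in Set.Ioi (0:ℝ), ENNReal.ofReal (x * (Real.exp (-x) ^ (n + 1) / (n + 1)))
      = ENNReal.ofReal (1 / ((n : ℝ) + 1) ^ 3) := by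
  have hn : (0:ℝ) < n + 1 := by positivity
  have h := Real.integral_rpow_mul_exp_neg_mul_Ioi (a := 2) (r := (n:ℝ) + 1) (by norm_num) hn
  have hfun : ∀ x : ℝ, x * (Real.exp (-x) ^ (n + 1) / (n + 1))
      = (1 / ((n:ℝ) + 1)) * (x ^ ((2:ℝ) - 1) * Real.exp (-(((n:ℝ) + 1) * x))) := by
    intro x
    rw [← Real.exp_nat_mul]
    norm_num
    ring_nf
  have h2 : ∫ x in Set.Ioi (0:ℝ), x * (Real.exp (-x) ^ (n + 1) / (n + 1))
      = 1 / ((n : ℝ) + 1) ^ 3 := by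
    simp_rw [hfun]
    rw [integral_const_mul, h, Real.Gamma_two]
    norm_num
    field_simp
  rw [← h2, ofReal_integral_eq_lintegral_ofReal]
  · by_contra hc
    have := integral_undef hc
    rw [h2] at this
    have : 0 < 1 / ((n : ℝ) + 1) ^ 3 := by positivity
    linarith
  · refine (ae_restrict_iff' measurableSet_Ioi).2 (Filter.Eventually.of_forall fun x hx => ?_)
    have hx' : 0 < x := hx
    show 0 ≤ _
    positivity

lemma lint_zeta :
    ∫⁻ x in Set.Ioi (0:ℝ), ENNReal.ofReal (x * -Real.log (1 - Real.exp (-x)))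
      = ENNReal.ofReal (∑' n : ℕ, 1 / ((n : ℝ) + 1) ^ 3) := by
  have h1 : ∀ x ∈ Set.Ioi (0:ℝ), ENNReal.ofReal (x * -Real.log (1 - Real.exp (-x)))
      = ∑' n : ℕ, ENNReal.ofReal (x * (Real.exp (-x) ^ (n + 1) / (n + 1))) := by
    intro x hx
    have hx' : 0 < x := hx
    have hlt : Real.exp (-x) < 1 := by rw [Real.exp_lt_one_iff]; linarith
    have hs := (Real.hasSum_pow_div_log_of_abs_lt_one (x := Real.exp (-x))
      (by rw [abs_of_pos (Real.exp_pos _)]; exact hlt)).mul_left x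
    rw [← hs.tsum_eq, ENNReal.ofReal_tsum_of_nonneg (fun n => by positivity) hs.summable]
  rw [setLIntegral_congr_fun measurableSet_Ioi h1, lintegral_tsum
    (fun n => by fun_prop)]
  simp_rw [int_x_exp]
  rw [ENNReal.ofReal_tsum_of_nonneg (fun n => by positivity)]
  have := (summable_nat_add_iff 1).2 (Real.summable_one_div_nat_pow.2 (by norm_num : 1 < 3))
  simpa using this

lemma lint_scale {t : ℝ} (ht : 0 < t) :
    ∫⁻ u in Set.Ioc (0:ℝ) 1, ENNReal.ofReal (t / (Real.exp t - 1) *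
      (u * t / (Real.exp (u * t) - 1)))
    = ENNReal.ofReal (1 / (Real.exp t - 1)) *
        ∫⁻ v in Set.Ioc 0 t, ENNReal.ofReal (v / (Real.exp v - 1)) := by
  have him : (fun u : ℝ => u * t) '' Set.Ioc 0 1 = Set.Ioc 0 t := by
    ext y
    constructor
    · rintro ⟨u, ⟨h0, h1⟩, rfl⟩
      exact ⟨by positivity, by simp only; nlinarith⟩
    · rintro ⟨h0, h1⟩
      exact ⟨y / t, ⟨by positivity, by rw [div_le_one ht]; exact h1⟩, by simp only; field_simp⟩
  have h2 : 1 < Real.exp t := Real.one_lt_exp_iff.2 ht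
  have h3 : 0 < Real.exp t - 1 := by linarith
  rw [← him, lintegral_image_eq_lintegral_abs_deriv_mul measurableSet_Ioc
    (f' := fun _ => t) (fun x hx => by simpa using ((hasDerivAt_id x).mul_const t).hasDerivWithinAt)
    (fun a _ b _ hab => by simpa [ht.ne'] using hab), ← lintegral_const_mul' _ _ (by simp)]
  refine setLIntegral_congr_fun measurableSet_Ioc fun u hu => ?_
  rw [abs_of_pos ht, ← ENNReal.ofReal_mul ht.le, ← ENNReal.ofReal_mul (by positivity)]
  congr 1
  ring

lemma lint_main :
    ∫⁻ t in Set.Ioi (0:ℝ), ∫⁻ u in Set.Ioc (0:ℝ) 1, ENNReal.ofReal (t / (Real.exp t - 1) *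
      (u * t / (Real.exp (u * t) - 1)))
    = ENNReal.ofReal (∑' n : ℕ, 1 / ((n : ℝ) + 1) ^ 3) := by
  rw [← lint_zeta, ← lint_sub, setLIntegral_congr_fun measurableSet_Ioi
    (fun t ht => lint_scale ht)]
  set k : ℝ → ℝ → ENNReal := fun t v => {p : ℝ × ℝ | p.2 ≤ p.1}.indicator
    (fun p => ENNReal.ofReal (1 / (Real.exp p.1 - 1)) * ENNReal.ofReal (p.2 / (Real.exp p.2 - 1)))
    (t, v) with hk
  have hm : Measurable (Function.uncurry k) := by
    have : MeasurableSet {p : ℝ × ℝ | p.2 ≤ p.1} := measurableSet_le measurable_snd measurable_fst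
    exact Measurable.indicator (by fun_prop) this
  have e1 : ∀ t ∈ Set.Ioi (0:ℝ), ENNReal.ofReal (1 / (Real.exp t - 1)) *
        ∫⁻ v in Set.Ioc 0 t, ENNReal.ofReal (v / (Real.exp v - 1))
        = ∫⁻ v in Set.Ioi 0, k t v := by
    intro t ht
    rw [← lintegral_const_mul' _ _ (by simp), ← Set.Ioi_inter_Iic, Set.inter_comm,
      ← setLIntegral_indicator measurableSet_Iic]
    rfl
  have e2 : ∀ v ∈ Set.Ioi (0:ℝ), ENNReal.ofReal (v / (Real.exp v - 1)) *
      ENNReal.ofReal (-Real.log (1 - Real.exp (-v))) = ∫⁻ t in Set.Ioi 0, k t v := by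
    intro v hv
    have hv' : 0 < v := hv
    rw [← lint_tail hv, ← lintegral_const_mul' _ _ (by simp)]
    have : Set.Ici v ∩ Set.Ioi 0 = Set.Ici v := by
      ext x; simp; intro h; linarith
    rw [← setLIntegral_congr (Ioi_ae_eq_Ici (a := v)).symm, ← this,
      ← setLIntegral_indicator measurableSet_Ici]
    refine lintegral_congr fun t => ?_
    simp only [hk, Set.indicator, Set.mem_Ici, Set.mem_ofPred_eq]
    split_ifs
    · rw [mul_comm]
    · rfl
  rw [setLIntegral_congr_fun measurableSet_Ioi e1, setLIntegral_congr_fun measurableSet_Ioi e2]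
  exact lintegral_lintegral_swap hm.aemeasurable

lemma real_part :
    ∫ p : ℝ × ℝ, p.2 / (Real.exp p.2 - 1) * (p.1 * p.2 / (Real.exp (p.1 * p.2) - 1))
      ∂((volume.restrict (Set.Ioc (0:ℝ) 1)).prod (volume.restrict (Set.Ioi (0:ℝ))))
    = ∑' n : ℕ, 1 / ((n : ℝ) + 1) ^ 3 := by
  have hm : Measurable (fun p : ℝ × ℝ =>
      p.2 / (Real.exp p.2 - 1) * (p.1 * p.2 / (Real.exp (p.1 * p.2) - 1))) := by fun_prop
  rw [integral_eq_lintegral_of_nonneg_ae _ hm.aestronglyMeasurable,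
    lintegral_prod_symm _ hm.ennreal_ofReal.aemeasurable]
  · rw [lint_main, ENNReal.toReal_ofReal (tsum_nonneg fun n => by positivity)]
  · have hg : ∀ x : ℝ, 0 ≤ x / (Real.exp x - 1) := by
      intro x
      rcases le_total 0 x with h | h
      · exact div_nonneg h (by linarith [Real.add_one_le_exp x])
      · exact div_nonneg_of_nonpos h (by linarith [Real.exp_le_one_iff.2 h])
    exact Filter.Eventually.of_forall fun p => mul_nonneg (hg _) (hg _)

lemma zeta_real : riemannZeta 3 = ((∑' n : ℕ, 1 / ((n : ℝ) + 1) ^ 3 : ℝ) : ℂ) := by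
  have h := zeta_eq_tsum_one_div_nat_add_one_cpow (s := 3) (by norm_num)
  rw [h, Complex.ofReal_tsum]
  refine tsum_congr fun n => ?_
  push_cast
  norm_cast

/-- The integrand after writing `-1/D` as a Laplace integral. -/
noncomputable def kerH (w : ℝ × ℝ) (p : ℝ × ℝ) : ℂ :=
  ((((1 / Real.cosh (π * w.1)) ^ 2 : ℝ) : ℂ) *
      Complex.exp (((p.1 * p.2 : ℝ) : ℂ) * (Complex.I * w.1 - 1 / 2))) *
  ((((1 / Real.cosh (π * w.2)) ^ 2 : ℝ) : ℂ) *
      Complex.exp ((p.2 : ℂ) * (Complex.I * w.2 - 1 / 2)))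

lemma continuous_sech_sq : Continuous (fun w : ℝ => (1 / Real.cosh (π * w)) ^ 2) := by
  have : ∀ w : ℝ, Real.cosh (π * w) ≠ 0 := fun w => (Real.cosh_pos _).ne'
  have h : Continuous (fun w : ℝ => Real.cosh (π * w)) := by fun_prop
  exact (continuous_const.div h this).pow 2

lemma kerH_cont : Continuous (Function.uncurry kerH) := by
  have h := continuous_sech_sq
  have h1 : Continuous (fun q : (ℝ × ℝ) × (ℝ × ℝ) => (1 / Real.cosh (π * q.1.1)) ^ 2) :=
    h.comp (by fun_prop)
  have h2 : Continuous (fun q : (ℝ × ℝ) × (ℝ × ℝ) => (1 / Real.cosh (π * q.1.2)) ^ 2) :=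
    h.comp (by fun_prop)
  unfold kerH Function.uncurry
  refine ((Complex.continuous_ofReal.comp h1).mul ?_).mul ((Complex.continuous_ofReal.comp h2).mul ?_)
  · fun_prop
  · fun_prop

lemma norm_exp_aux (a x : ℝ) :
    ‖Complex.exp ((a : ℂ) * (Complex.I * x - 1 / 2))‖ = Real.exp (-a / 2) := by
  rw [Complex.norm_exp]
  congr 1
  simp
  ring

lemma kerH_norm (w p : ℝ × ℝ) : ‖kerH w p‖ = (1 / Real.cosh (π * w.1)) ^ 2 *
    (1 / Real.cosh (π * w.2)) ^ 2 * (Real.exp (-(p.1 * p.2) / 2) * Real.exp (-p.2 / 2)) := by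
  unfold kerH
  rw [norm_mul, norm_mul, norm_mul, norm_exp_aux, norm_exp_aux, Complex.norm_real,
    Complex.norm_real, Real.norm_of_nonneg (by positivity), Real.norm_of_nonneg (by positivity)]
  ring

lemma kerH_integrable : Integrable (Function.uncurry kerH) ((volume : Measure (ℝ × ℝ)).prod
    ((volume.restrict (Set.Ioc (0:ℝ) 1)).prod (volume.restrict (Set.Ioi (0:ℝ))))) := by
  have h1 : Integrable (fun w : ℝ × ℝ => (1 / Real.cosh (π * w.1)) ^ 2 *
      (1 / Real.cosh (π * w.2)) ^ 2) (volume : Measure (ℝ × ℝ)) :=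
    integrable_sech_sq.mul_prod integrable_sech_sq
  have h2 : Integrable (fun p : ℝ × ℝ => (1:ℝ) * Real.exp (-(1/2) * p.2))
      ((volume.restrict (Set.Ioc (0:ℝ) 1)).prod (volume.restrict (Set.Ioi (0:ℝ)))) :=
    (integrable_const (1:ℝ)).mul_prod (integrableOn_exp_mul_Ioi (by norm_num) 0)
  refine (h1.mul_prod h2).mono' kerH_cont.aestronglyMeasurable ?_
  have hae : ∀ᵐ p ∂((volume.restrict (Set.Ioc (0:ℝ) 1)).prod (volume.restrict (Set.Ioi (0:ℝ)))),
      p ∈ Set.Ioc (0:ℝ) 1 ×ˢ Set.Ioi (0:ℝ) := by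
    rw [Measure.prod_restrict]
    exact ae_restrict_mem (measurableSet_Ioc.prod measurableSet_Ioi)
  have hae2 := (Measure.quasiMeasurePreserving_snd (μ := (volume : Measure (ℝ × ℝ)))).ae hae
  filter_upwards [hae2] with q hq
  obtain ⟨⟨ha, hb⟩, hc⟩ := hq
  have hc' : 0 < q.2.2 := hc
  show ‖kerH q.1 q.2‖ ≤ _
  rw [kerH_norm]
  have e1 : Real.exp (-(q.2.1 * q.2.2) / 2) ≤ 1 := by
    rw [Real.exp_le_one_iff]
    have := mul_pos ha hc'
    linarith
  have e2 : Real.exp (-q.2.2 / 2) = Real.exp (-(1/2) * q.2.2) := by congr 1; ring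
  rw [e2]
  gcongr

lemma kerH_inner (w : ℝ × ℝ) :
    ∫ p, kerH w p ∂((volume.restrict (Set.Ioc (0:ℝ) 1)).prod (volume.restrict (Set.Ioi (0:ℝ))))
    = -∫ u in (0:ℝ)..1,
        (((1 / Real.cosh (π * w.1)) ^ 2 * (1 / Real.cosh (π * w.2)) ^ 2 : ℝ) : ℂ) /
          (Complex.I * w.2 - 1 / 2 + (u : ℂ) * (Complex.I * w.1 - 1 / 2)) := by
  have hi : Integrable (kerH w)
      ((volume.restrict (Set.Ioc (0:ℝ) 1)).prod (volume.restrict (Set.Ioi (0:ℝ)))) := by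
    have h2 : Integrable (fun p : ℝ × ℝ => (1:ℝ) * Real.exp (-(1/2) * p.2))
        ((volume.restrict (Set.Ioc (0:ℝ) 1)).prod (volume.restrict (Set.Ioi (0:ℝ)))) :=
      (integrable_const (1:ℝ)).mul_prod (integrableOn_exp_mul_Ioi (by norm_num) 0)
    refine (h2.const_mul ((1 / Real.cosh (π * w.1)) ^ 2 * (1 / Real.cosh (π * w.2)) ^ 2)).mono'
      (kerH_cont.comp (by fun_prop : Continuous fun p : ℝ × ℝ => (w, p))).aestronglyMeasurable ?_
    have hae : ∀ᵐ p ∂((volume.restrict (Set.Ioc (0:ℝ) 1)).prod (volume.restrict (Set.Ioi (0:ℝ)))),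
        p ∈ Set.Ioc (0:ℝ) 1 ×ˢ Set.Ioi (0:ℝ) := by
      rw [Measure.prod_restrict]
      exact ae_restrict_mem (measurableSet_Ioc.prod measurableSet_Ioi)
    filter_upwards [hae] with p hp
    obtain ⟨⟨ha, hb⟩, hc⟩ := hp
    have hc' : 0 < p.2 := hc
    rw [kerH_norm]
    have e1 : Real.exp (-(p.1 * p.2) / 2) ≤ 1 := by
      rw [Real.exp_le_one_iff]
      have := mul_pos ha hc'
      linarith
    have e2 : Real.exp (-p.2 / 2) = Real.exp (-(1/2) * p.2) := by congr 1; ring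
    rw [e2]
    gcongr
  rw [integral_prod _ hi, intervalIntegral.integral_of_le zero_le_one, ← integral_neg]
  refine setIntegral_congr_fun measurableSet_Ioc fun u hu => ?_
  obtain ⟨ha, hb⟩ := hu
  set D : ℂ := Complex.I * w.2 - 1 / 2 + (u : ℂ) * (Complex.I * w.1 - 1 / 2) with hD
  have hre : D.re < 0 := by
    simp [hD]
    linarith
  have e : ∀ t : ℝ, kerH w (u, t) =
      (((1 / Real.cosh (π * w.1)) ^ 2 * (1 / Real.cosh (π * w.2)) ^ 2 : ℝ) : ℂ) *
        Complex.exp (D * t) := by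
    intro t
    have : D * t = ((u * t : ℝ) : ℂ) * (Complex.I * w.1 - 1 / 2) +
      (t : ℂ) * (Complex.I * w.2 - 1 / 2) := by rw [hD]; push_cast; ring
    rw [this, Complex.exp_add]
    unfold kerH
    push_cast
    ring
  simp only [e]
  rw [integral_const_mul, integral_exp_mul_complex_Ioi hre]
  simp
  ring

lemma kerH_outer (p : ℝ × ℝ) (h1 : 0 < p.1) (h2 : 0 < p.2) :
    ∫ w : ℝ × ℝ, kerH w p = ((4 / π ^ 2 * (p.2 / (Real.exp p.2 - 1) *
      (p.1 * p.2 / (Real.exp (p.1 * p.2) - 1))) : ℝ) : ℂ) := by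
  unfold kerH
  rw [Measure.volume_eq_prod]
  refine (integral_prod_mul
    (fun x : ℝ => (((1 / Real.cosh (π * x)) ^ 2 : ℝ) : ℂ) *
      Complex.exp (((p.1 * p.2 : ℝ) : ℂ) * (Complex.I * x - 1 / 2)))
    (fun x : ℝ => (((1 / Real.cosh (π * x)) ^ 2 : ℝ) : ℂ) *
      Complex.exp ((p.2 : ℂ) * (Complex.I * x - 1 / 2)))).trans ?_
  rw [fourier_sech (mul_pos h1 h2), fourier_sech h2, ← Complex.ofReal_mul]
  congr 1
  ring

/-- `ζ(3) = -(π²/4) ∫_{ℝ²} ∫_0^1 sech²(πw₁)sech²(πw₂)/(iw₂ - 1/2 + u(iw₁ - 1/2)) du dw₂ dw₁`,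
and the triple integral converges. -/
theorem zeta_three_integral :
    Integrable (fun w : ℝ × ℝ =>
      ∫ u in (0:ℝ)..1,
        (((1 / Real.cosh (π * w.1)) ^ 2 * (1 / Real.cosh (π * w.2)) ^ 2 : ℝ) : ℂ) /
          (Complex.I * w.2 - 1 / 2 + (u : ℂ) * (Complex.I * w.1 - 1 / 2))) volume ∧
    riemannZeta 3 =
      -((π : ℂ) ^ 2 / 4) * ∫ w : ℝ × ℝ,
        ∫ u in (0:ℝ)..1,
          (((1 / Real.cosh (π * w.1)) ^ 2 * (1 / Real.cosh (π * w.2)) ^ 2 : ℝ) : ℂ) /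
            (Complex.I * w.2 - 1 / 2 + (u : ℂ) * (Complex.I * w.1 - 1 / 2)) := by
  have hI := kerH_integrable
  have hswap := integral_integral_swap hI
  have hleft := hI.integral_prod_left
  simp only [Function.uncurry_apply_pair, kerH_inner] at hleft
  simp only [kerH_inner] at hswap
  refine ⟨by simpa using hleft.neg, ?_⟩
  rw [integral_neg] at hswap
  have hae : ∀ᵐ p ∂((volume.restrict (Set.Ioc (0:ℝ) 1)).prod (volume.restrict (Set.Ioi (0:ℝ)))),
      p ∈ Set.Ioc (0:ℝ) 1 ×ˢ Set.Ioi (0:ℝ) := by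
    rw [Measure.prod_restrict]
    exact ae_restrict_mem (measurableSet_Ioc.prod measurableSet_Ioi)
  rw [integral_congr_ae (hae.mono fun p hp => kerH_outer p hp.1.1 hp.2), integral_complex_ofReal,
    integral_const_mul, real_part] at hswap
  rw [neg_mul, ← mul_neg, hswap, zeta_real]
  have hp : (π : ℂ) ≠ 0 := by exact_mod_cast Real.pi_pos.ne'
  rw [Complex.ofReal_mul]
  generalize ((∑' n : ℕ, 1 / ((n : ℝ) + 1) ^ 3 : ℝ) : ℂ) = Z
  push_cast
  field_simp
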